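/- In the group U, with x = (ac^{-1})^4 and y = (c^{-1}a)^4, the following conjugation relations hold: a^{-1}xa = y, b^{-1}xb = y, c^{-1}xc = y, a^{-1}ya = x, b^{-1}yb = x^{-1}, and c^{-1}yc = x^{-1}. -/

import Mathlib

/-- The defining relators of the group `U` on generators `a, b, c` (indexed `0, 1, 2`):
`a^4, b^4, c^4, (ab)^2, (bc)^2, (abc)^2, (a^2b^2)^4, a^2c^2b^2(ac)^2, [a,c⁻¹]b^2`,
where `[x,y] = x⁻¹y⁻¹xy`. -/
def Urels : Set (FreeGroup (Fin 3)) :=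
  {(FreeGroup.of 0) ^ 4, (FreeGroup.of 1) ^ 4, (FreeGroup.of 2) ^ 4,
   (FreeGroup.of 0 * FreeGroup.of 1) ^ 2,
   (FreeGroup.of 1 * FreeGroup.of 2) ^ 2,
   (FreeGroup.of 0 * FreeGroup.of 1 * FreeGroup.of 2) ^ 2,
   ((FreeGroup.of 0) ^ 2 * (FreeGroup.of 1) ^ 2) ^ 4,
   (FreeGroup.of 0) ^ 2 * (FreeGroup.of 2) ^ 2 * (FreeGroup.of 1) ^ 2 *
     (FreeGroup.of 0 * FreeGroup.of 2) ^ 2,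
   (FreeGroup.of 0)⁻¹ * FreeGroup.of 2 * FreeGroup.of 0 * (FreeGroup.of 2)⁻¹ *
     (FreeGroup.of 1) ^ 2}

/-- The finitely presented group `U`. -/
abbrev UGroup : Type := PresentedGroup Urels

/-- The generator `a` of `U`. -/
def Ua : UGroup := PresentedGroup.of 0

/-- The generator `b` of `U`. -/
def Ub : UGroup := PresentedGroup.of 1

/-- The generator `c` of `U`. -/
def Uc : UGroup := PresentedGroup.of 2

/-- The element `x = (ac⁻¹)^4` of `U`. -/
def Ux : UGroup := (Ua * Uc⁻¹) ^ 4

/-- The element `y = (c⁻¹a)^4` of `U`. -/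
def Uy : UGroup := (Uc⁻¹ * Ua) ^ 4

/-!
Put `d = c⁻¹a`, so that `y = d⁴` and `x = aya⁻¹ = cyc⁻¹`. The relators make `bc` an involution that
inverts `a` and `d`, so all six relations reduce to the facts that `a²` centralizes `d⁴` and that
`c²` inverts it. Moreover `z = [d⁻¹, a]` equals `b²`, hence is an involution. With the convention
`[g, h] = ghg⁻¹h⁻¹`, the elements `p = [z, a]` and `q = [z, a⁻¹]` behave like translations of a
plane in which `z` acts as a half-turn and `a` as a quarter-turn: `z` inverts both, conjugation by
`a` sends `p` to `q` and `q` to `p⁻¹`, and `pq = [z, a²]` has square `1`; this forces `p⁴ = 1`.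
Now `p = [d⁻¹, a²]` commutes with `d`, and `a²da⁻² = dp` shows that `a²` centralizes `d⁴`. Finally
`d` inverts `q`, so the element `(c²d²)² = a(pq)a⁻¹ = qp⁻¹`, whose square is `1`, commutes with
`d²`; therefore `c²` inverts `d⁴`.
-/

open scoped commutatorElement

section Group

variable {G : Type*} [Group G]

theorem inv_eq_self_of_sq_eq_one {g : G} (hg : g ^ 2 = 1) : g⁻¹ = g :=
  inv_eq_of_mul_eq_one_right (by rw [← sq, hg])

theorem commutator_eq_mul_sq {g h : G} (hg : g ^ 2 = 1) (hh : h ^ 2 = 1) :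
    ⁅g, h⁆ = (g * h) ^ 2 := by
  rw [commutatorElement_def, inv_eq_self_of_sq_eq_one hg, inv_eq_self_of_sq_eq_one hh, sq,
    mul_assoc (g * h)]

theorem conj_commutator_of_sq_eq_one {z : G} (hz : z ^ 2 = 1) (g : G) :
    z * ⁅z, g⁆ * z⁻¹ = ⁅z, g⁆⁻¹ := by
  calc z * ⁅z, g⁆ * z⁻¹ = z ^ 2 * g * z⁻¹ * g⁻¹ * z⁻¹ := by rw [sq]; group
    _ = g * z * g⁻¹ * z⁻¹ := by rw [hz, one_mul, inv_eq_self_of_sq_eq_one hz]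
    _ = ⁅z, g⁆⁻¹ := by rw [commutatorElement_inv, commutatorElement_def]

theorem commute_commutator_of_commute_inv_mul_mul_inv {d e : G} (he : e ^ 2 = 1)
    (h : Commute e (d⁻¹ * e * d⁻¹)) : Commute d ⁅d⁻¹, e⁆ := by
  have hinv : e⁻¹ = e := inv_eq_self_of_sq_eq_one he
  have hcomm : e * (d * e * d) = d * e * d * e := by
    simpa only [mul_inv_rev, inv_inv, hinv, mul_assoc] using h.inv_inv.eq
  calc d * ⁅d⁻¹, e⁆ = d⁻¹ * (d * e * d * e) := by
        rw [commutatorElement_def, hinv]; group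
    _ = ⁅d⁻¹, e⁆ * d := by
        rw [← hcomm, commutatorElement_def, hinv]; group

theorem commute_pow_of_commute_commutator {d e : G} {n : ℕ} (hd : Commute d ⁅d⁻¹, e⁆)
    (hn : ⁅d⁻¹, e⁆ ^ n = 1) : Commute e (d ^ n) := by
  have hconj : e * d * e⁻¹ = d * ⁅d⁻¹, e⁆ := by group
  have hpow : e * d ^ n * e⁻¹ = d ^ n := by
    rw [← conj_pow, hconj, hd.mul_pow, hn, mul_one]
  exact mul_inv_eq_iff_eq_mul.mp hpow

theorem conj_sq_eq_inv_of_commute_mul_sq {k g : G} (hk : k ^ 2 = 1) (hkg : (k * g) ^ 4 = 1)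
    (hcomm : Commute ((k * g) ^ 2) g) : k * g ^ 2 * k⁻¹ = (g ^ 2)⁻¹ := by
  have hconj : k * g * k⁻¹ = (k * g) ^ 2 * g⁻¹ := by
    rw [inv_eq_self_of_sq_eq_one hk, sq]; group
  calc k * g ^ 2 * k⁻¹ = ((k * g) ^ 2 * g⁻¹) ^ 2 := by rw [← conj_pow, hconj]
    _ = (k * g) ^ 4 * g⁻¹ ^ 2 := by rw [hcomm.inv_right.mul_pow, ← pow_mul]
    _ = (g ^ 2)⁻¹ := by rw [hkg, one_mul, inv_pow]

section QuarterTurn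

variable {a z : G} (ha : a ^ 4 = 1) (hz : z ^ 2 = 1) (hza : (z * a) ^ 4 = 1)
include ha hz hza

theorem conj_commutator_eq_commutator_inv_right : a * ⁅z, a⁆ * a⁻¹ = ⁅z, a⁻¹⁆ := by
  rw [← mul_inv_eq_one]
  calc a * ⁅z, a⁆ * a⁻¹ * ⁅z, a⁻¹⁆⁻¹
      = a * z * (a * z⁻¹ * (a ^ 4)⁻¹ * a * z) * a * z⁻¹ := by group
    _ = a * (z * a) ^ 4 * a⁻¹ := by
        rw [ha, inv_eq_self_of_sq_eq_one hz]; simp only [pow_succ, pow_zero]; group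
    _ = 1 := by rw [hza, mul_one, mul_inv_cancel]

theorem commutator_mul_commutator_inv_right : ⁅z, a⁆ * ⁅z, a⁻¹⁆ = ⁅z, a ^ 2⁆ := by
  rw [← conj_commutator_eq_commutator_inv_right ha hz hza, sq]; group

theorem commute_commutator_commutator_inv_right : Commute ⁅z, a⁆ ⁅z, a⁻¹⁆ := by
  rw [← Commute.inv_inv_iff]
  calc ⁅z, a⁆⁻¹ * ⁅z, a⁻¹⁆⁻¹ = z * (⁅z, a⁆ * ⁅z, a⁻¹⁆) * z⁻¹ := by
        rw [← conj_mul, conj_commutator_of_sq_eq_one hz, conj_commutator_of_sq_eq_one hz]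
    _ = (⁅z, a⁆ * ⁅z, a⁻¹⁆)⁻¹ := by
        rw [commutator_mul_commutator_inv_right ha hz hza, conj_commutator_of_sq_eq_one hz]
    _ = ⁅z, a⁻¹⁆⁻¹ * ⁅z, a⁆⁻¹ := mul_inv_rev _ _

theorem conj_commutator_sq_right : a * ⁅z, a ^ 2⁆ * a⁻¹ = ⁅z, a⁻¹⁆ * ⁅z, a⁆⁻¹ := by
  have hconj : a * ⁅z, a⁻¹⁆ * a⁻¹ = ⁅z, a⁆⁻¹ := by group
  rw [← commutator_mul_commutator_inv_right ha hz hza, ← conj_mul,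
    conj_commutator_eq_commutator_inv_right ha hz hza, hconj]

theorem commutator_pow_four_eq_one (hsq : ⁅z, a ^ 2⁆ ^ 2 = 1) : ⁅z, a⁆ ^ 4 = 1 := by
  have hcomm : Commute ⁅z, a⁆ ⁅z, a⁻¹⁆ := commute_commutator_commutator_inv_right ha hz hza
  have hmul : ⁅z, a⁆ ^ 2 * ⁅z, a⁻¹⁆ ^ 2 = 1 := by
    rw [← hcomm.mul_pow, commutator_mul_commutator_inv_right ha hz hza, hsq]
  have heq : ⁅z, a⁻¹⁆ ^ 2 = ⁅z, a⁆ ^ 2 := by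
    rw [← mul_inv_eq_one, ← inv_pow, ← hcomm.symm.inv_right.mul_pow,
      ← conj_commutator_sq_right ha hz hza, conj_pow, hsq, mul_one, mul_inv_cancel]
  calc ⁅z, a⁆ ^ 4 = ⁅z, a⁆ ^ 2 * ⁅z, a⁆ ^ 2 := by rw [← pow_add]
    _ = ⁅z, a⁆ ^ 2 * ⁅z, a⁻¹⁆ ^ 2 := by rw [heq]
    _ = 1 := hmul

end QuarterTurn

section TwoGenerator

variable {a d : G} (ha : a ^ 4 = 1) (hz : ⁅d⁻¹, a⁆ ^ 2 = 1)

include hz in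
theorem commutator_sq_right_eq : ⁅d⁻¹, a ^ 2⁆ = ⁅⁅d⁻¹, a⁆, a⁆ := by
  rw [commutatorElement_def ⁅d⁻¹, a⁆, inv_eq_self_of_sq_eq_one hz, sq]; group

include ha in
theorem commutator_mul_pow_four_eq_one : (⁅d⁻¹, a⁆ * a) ^ 4 = 1 := by
  calc (⁅d⁻¹, a⁆ * a) ^ 4 = d⁻¹ * a ^ 4 * d := by simp only [pow_succ, pow_zero]; group
    _ = 1 := by rw [ha, mul_one, inv_mul_cancel]

variable (hcomm : Commute d ⁅d⁻¹, a ^ 2⁆)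
include ha hz hcomm

theorem semiconjBy_commutator_inv_right :
    SemiconjBy d ⁅⁅d⁻¹, a⁆, a⁻¹⁆ ⁅⁅d⁻¹, a⁆, a⁻¹⁆⁻¹ := by
  rw [commutator_sq_right_eq hz] at hcomm
  set z := ⁅d⁻¹, a⁆ with hz_def
  have hq : a * ⁅z, a⁆ * a⁻¹ = ⁅z, a⁻¹⁆ :=
    conj_commutator_eq_commutator_inv_right ha hz (commutator_mul_pow_four_eq_one ha)
  have hconj : d⁻¹ * ⁅z, a⁻¹⁆ * d = ⁅z, a⁻¹⁆⁻¹ := by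
    calc d⁻¹ * ⁅z, a⁻¹⁆ * d = z * (a * (d⁻¹ * ⁅z, a⁆ * d) * a⁻¹) * z⁻¹ := by
          rw [← hq, hz_def]; group
      _ = z * ⁅z, a⁻¹⁆ * z⁻¹ := by
          rw [hcomm.inv_left.eq, inv_mul_cancel_right, hq]
      _ = ⁅z, a⁻¹⁆⁻¹ := conj_commutator_of_sq_eq_one hz _
  have hsemi : SemiconjBy d ⁅z, a⁻¹⁆⁻¹ ⁅z, a⁻¹⁆ := by
    rw [← hconj, SemiconjBy]; group
  simpa only [inv_inv] using hsemi.inv_right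

theorem commute_sq_conj_commutator_sq_right : Commute (d ^ 2) (a * ⁅⁅d⁻¹, a⁆, a ^ 2⁆ * a⁻¹) := by
  have hp : Commute (d ^ 2) ⁅⁅d⁻¹, a⁆, a⁆ := by
    rw [← commutator_sq_right_eq hz]; exact hcomm.pow_left 2
  have hq : Commute (d ^ 2) ⁅⁅d⁻¹, a⁆, a⁻¹⁆ := by
    have hd := semiconjBy_commutator_inv_right ha hz hcomm
    rw [sq, Commute]
    simpa only [inv_inv] using hd.inv_right.mul_left hd
  rw [conj_commutator_sq_right ha hz (commutator_mul_pow_four_eq_one ha)]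
  exact hq.mul_right hp.inv_right

variable (hsq : ⁅⁅d⁻¹, a⁆, a ^ 2⁆ ^ 2 = 1)
include hsq

theorem commute_sq_pow_four : Commute (a ^ 2) (d ^ 4) := by
  refine commute_pow_of_commute_commutator hcomm ?_
  rw [commutator_sq_right_eq hz]
  exact commutator_pow_four_eq_one ha hz (commutator_mul_pow_four_eq_one ha) hsq

theorem conj_pow_four_eq_inv (hc : (a * d⁻¹) ^ 4 = 1) :
    (a * d⁻¹) ^ 2 * d ^ 4 * ((a * d⁻¹) ^ 2)⁻¹ = (d ^ 4)⁻¹ := by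
  have ha2 : (a ^ 2) ^ 2 = 1 := by rw [← pow_mul, ha]
  have hc2 : ((a * d⁻¹) ^ 2) ^ 2 = 1 := by rw [← pow_mul, hc]
  have hmul : ((a * d⁻¹) ^ 2 * d ^ 2) ^ 2 = a * ⁅⁅d⁻¹, a⁆, a ^ 2⁆ * a⁻¹ := by
    rw [commutator_eq_mul_sq hz ha2]; simp only [pow_succ, pow_zero]; group
  have hmul4 : ((a * d⁻¹) ^ 2 * d ^ 2) ^ 4 = 1 := by
    rw [pow_mul _ 2 2, hmul, conj_pow, hsq, mul_one, mul_inv_cancel]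
  have hcomm2 : Commute (((a * d⁻¹) ^ 2 * d ^ 2) ^ 2) (d ^ 2) := by
    rw [hmul]; exact (commute_sq_conj_commutator_sq_right ha hz hcomm).symm
  simpa only [← pow_mul] using conj_sq_eq_inv_of_commute_mul_sq hc2 hmul4 hcomm2

end TwoGenerator

end Group

theorem Ua_pow_four_eq_one : Ua ^ 4 = 1 :=
  PresentedGroup.one_of_mem (rels := Urels) (x := FreeGroup.of 0 ^ 4) (by simp [Urels])

theorem Ub_pow_four_eq_one : Ub ^ 4 = 1 :=
  PresentedGroup.one_of_mem (rels := Urels) (x := FreeGroup.of 1 ^ 4) (by simp [Urels])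

theorem Uc_pow_four_eq_one : Uc ^ 4 = 1 :=
  PresentedGroup.one_of_mem (rels := Urels) (x := FreeGroup.of 2 ^ 4) (by simp [Urels])

theorem Ub_mul_Uc_sq_eq_one : (Ub * Uc) ^ 2 = 1 :=
  PresentedGroup.one_of_mem (rels := Urels) (x := (FreeGroup.of 1 * FreeGroup.of 2) ^ 2)
    (by simp [Urels])

theorem Ua_mul_Ub_mul_Uc_sq_eq_one : (Ua * Ub * Uc) ^ 2 = 1 :=
  PresentedGroup.one_of_mem (rels := Urels)
    (x := (FreeGroup.of 0 * FreeGroup.of 1 * FreeGroup.of 2) ^ 2) (by simp [Urels])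

theorem Ua_sq_mul_Ub_sq_pow_four_eq_one : (Ua ^ 2 * Ub ^ 2) ^ 4 = 1 :=
  PresentedGroup.one_of_mem (rels := Urels)
    (x := (FreeGroup.of 0 ^ 2 * FreeGroup.of 1 ^ 2) ^ 4) (by simp [Urels])

theorem Ua_sq_mul_Uc_sq_mul_Ub_sq_mul_eq_one :
    Ua ^ 2 * Uc ^ 2 * Ub ^ 2 * (Ua * Uc) ^ 2 = 1 :=
  PresentedGroup.one_of_mem (rels := Urels)
    (x := FreeGroup.of 0 ^ 2 * FreeGroup.of 2 ^ 2 * FreeGroup.of 1 ^ 2 *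
      (FreeGroup.of 0 * FreeGroup.of 2) ^ 2) (by simp [Urels])

theorem commutator_mul_Ub_sq_eq_one : ⁅Ua⁻¹, Uc⁆ * Ub ^ 2 = 1 := by
  rw [commutatorElement_def, inv_inv]
  exact PresentedGroup.one_of_mem (rels := Urels)
    (x := (FreeGroup.of 0)⁻¹ * FreeGroup.of 2 * FreeGroup.of 0 * (FreeGroup.of 2)⁻¹ *
      FreeGroup.of 1 ^ 2) (by simp [Urels])

/-- The element `d = c⁻¹a` of `U`, a fourth root of `y` which together with `a` generates
`⟨a, c⟩`; it replaces `c` as a generator. -/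
def Ud : UGroup := Uc⁻¹ * Ua

theorem Uc_eq_Ua_mul_Ud_inv : Uc = Ua * Ud⁻¹ := by
  rw [Ud]; group

theorem Uy_eq_Ud_pow_four : Uy = Ud ^ 4 := rfl

theorem Ux_eq_conj_Uy : Ux = Ua * Uy * Ua⁻¹ := by
  rw [Ux, Uy, ← conj_pow]; group

theorem Uc_conj_Uy : Uc * Uy * Uc⁻¹ = Ux := by
  rw [Ux, Uy, ← conj_pow]; group

theorem Ua_sq_sq_eq_one : (Ua ^ 2) ^ 2 = 1 := by
  rw [← pow_mul, Ua_pow_four_eq_one]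

theorem Ub_sq_sq_eq_one : (Ub ^ 2) ^ 2 = 1 := by
  rw [← pow_mul, Ub_pow_four_eq_one]

theorem Ub_sq_eq_commutator : Ub ^ 2 = ⁅Uc, Ua⁻¹⁆ := by
  rw [eq_inv_of_mul_eq_one_right commutator_mul_Ub_sq_eq_one, commutatorElement_inv]

theorem commutator_Ud_inv_Ua : ⁅Ud⁻¹, Ua⁆ = Ub ^ 2 := by
  calc ⁅Ud⁻¹, Ua⁆ = ⁅Uc, Ua⁻¹⁆⁻¹ := by rw [Ud]; group
    _ = Ub ^ 2 := by rw [← Ub_sq_eq_commutator, inv_eq_self_of_sq_eq_one Ub_sq_sq_eq_one]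

theorem commutator_Ud_inv_Ua_sq_eq_one : ⁅Ud⁻¹, Ua⁆ ^ 2 = 1 := by
  rw [commutator_Ud_inv_Ua, Ub_sq_sq_eq_one]

theorem commutator_commutator_Ua_sq_sq_eq_one : ⁅⁅Ud⁻¹, Ua⁆, Ua ^ 2⁆ ^ 2 = 1 := by
  rw [commutator_Ud_inv_Ua, ← inv_inj, ← inv_pow, commutatorElement_inv,
    commutator_eq_mul_sq Ua_sq_sq_eq_one Ub_sq_sq_eq_one, ← pow_mul,
    Ua_sq_mul_Ub_sq_pow_four_eq_one, inv_one]

theorem commute_Ua_sq_Uc_mul_Ua_mul_Uc : Commute (Ua ^ 2) (Uc * Ua * Uc) := by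
  rw [← Commute.inv_right_iff, ← commutatorElement_eq_one_iff_commute]
  calc ⁅Ua ^ 2, (Uc * Ua * Uc)⁻¹⁆
      = Ua ^ 2 * (Uc * Ua * Uc)⁻¹ * Ua ^ 2 * (Uc * Ua * Uc) := by
        rw [commutatorElement_def, inv_eq_self_of_sq_eq_one Ua_sq_sq_eq_one, inv_inv]
    _ = Ua ^ 2 * (Uc ^ 4)⁻¹ * Uc ^ 2 * ⁅Uc, Ua⁻¹⁆ * (Ua * Uc) ^ 2 := by
        rw [sq (Ua * Uc), sq Ua]; group
    _ = 1 := by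
        rw [Uc_pow_four_eq_one, inv_one, mul_one, ← Ub_sq_eq_commutator,
          Ua_sq_mul_Uc_sq_mul_Ub_sq_mul_eq_one]

theorem commute_Ud_commutator_Ua_sq : Commute Ud ⁅Ud⁻¹, Ua ^ 2⁆ := by
  refine commute_commutator_of_commute_inv_mul_mul_inv Ua_sq_sq_eq_one ?_
  have hd : Ud⁻¹ * Ua ^ 2 * Ud⁻¹ = Ua⁻¹ * (Uc * Ua * Uc) := by
    rw [Ud]; group
  rw [hd]
  exact ((Commute.refl Ua).pow_left 2).inv_right.mul_right commute_Ua_sq_Uc_mul_Ua_mul_Uc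

theorem commute_Ua_sq_Uy : Commute (Ua ^ 2) Uy :=
  commute_sq_pow_four Ua_pow_four_eq_one commutator_Ud_inv_Ua_sq_eq_one commute_Ud_commutator_Ua_sq
    commutator_commutator_Ua_sq_sq_eq_one

theorem Uc_sq_conj_Uy : Uc ^ 2 * Uy * (Uc ^ 2)⁻¹ = Uy⁻¹ := by
  rw [Uy_eq_Ud_pow_four, Uc_eq_Ua_mul_Ud_inv]
  exact conj_pow_four_eq_inv Ua_pow_four_eq_one commutator_Ud_inv_Ua_sq_eq_one
    commute_Ud_commutator_Ua_sq commutator_commutator_Ua_sq_sq_eq_one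
    (Uc_eq_Ua_mul_Ud_inv ▸ Uc_pow_four_eq_one)

theorem Ua_inv_conj_Uy : Ua⁻¹ * Uy * Ua = Ux := by
  calc Ua⁻¹ * Uy * Ua = Ua⁻¹ * (Uy * Ua ^ 2) * Ua⁻¹ := by group
    _ = Ua * Uy * Ua⁻¹ := by rw [← commute_Ua_sq_Uy.eq]; group
    _ = Ux := Ux_eq_conj_Uy.symm

theorem Uc_inv_conj_Uy : Uc⁻¹ * Uy * Uc = Ux⁻¹ := by
  calc Uc⁻¹ * Uy * Uc = Uc⁻¹ * (Uc ^ 2 * Uy * (Uc ^ 2)⁻¹)⁻¹ * Uc := by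
        rw [Uc_sq_conj_Uy, inv_inv]
    _ = (Uc * Uy * Uc⁻¹)⁻¹ := by group
    _ = Ux⁻¹ := by rw [Uc_conj_Uy]

theorem Ub_mul_Uc_inv_conj_Ua : (Ub * Uc)⁻¹ * Ua * (Ub * Uc) = Ua⁻¹ := by
  rw [inv_eq_self_of_sq_eq_one Ub_mul_Uc_sq_eq_one]
  refine eq_inv_of_mul_eq_one_right ?_
  rw [← Ua_mul_Ub_mul_Uc_sq_eq_one, sq]; group

theorem Ub_mul_Uc_inv_conj_Uc : (Ub * Uc)⁻¹ * Uc * (Ub * Uc) = Ua⁻¹ * Uc⁻¹ * Ua := by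
  have hb : Uc * (Ub * Uc) = Ub⁻¹ := by
    refine eq_inv_of_mul_eq_one_right ?_
    rw [← Ub_mul_Uc_sq_eq_one, sq, mul_assoc]
  calc (Ub * Uc)⁻¹ * Uc * (Ub * Uc) = Uc⁻¹ * (Ub ^ 2)⁻¹ := by
        rw [mul_assoc, hb]; group
    _ = Uc⁻¹ * ⁅Uc, Ua⁻¹⁆ := by rw [inv_eq_self_of_sq_eq_one Ub_sq_sq_eq_one, Ub_sq_eq_commutator]
    _ = Ua⁻¹ * Uc⁻¹ * Ua := by group

theorem Ub_mul_Uc_inv_conj_Uy : (Ub * Uc)⁻¹ * Uy * (Ub * Uc) = Uy⁻¹ := by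
  have hd : (Ub * Uc)⁻¹ * Ud * (Ub * Uc) = Ud⁻¹ := by
    calc (Ub * Uc)⁻¹ * Ud * (Ub * Uc)
        = ((Ub * Uc)⁻¹ * Uc * (Ub * Uc))⁻¹ * ((Ub * Uc)⁻¹ * Ua * (Ub * Uc)) := by
          rw [Ud]; group
      _ = Ud⁻¹ := by
          rw [Ub_mul_Uc_inv_conj_Uc, Ub_mul_Uc_inv_conj_Ua, Ud]; group
  rw [Uy_eq_Ud_pow_four, ← inv_pow, ← hd]
  simpa only [inv_inv] using (conj_pow (a := (Ub * Uc)⁻¹) (b := Ud) (i := 4)).symm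

theorem Ub_inv_conj_Uy : Ub⁻¹ * Uy * Ub = Ux⁻¹ := by
  calc Ub⁻¹ * Uy * Ub = Uc * ((Ub * Uc)⁻¹ * Uy * (Ub * Uc)) * Uc⁻¹ := by group
    _ = (Uc * Uy * Uc⁻¹)⁻¹ := by rw [Ub_mul_Uc_inv_conj_Uy]; group
    _ = Ux⁻¹ := by rw [Uc_conj_Uy]

theorem Ub_mul_Uc_inv_conj_Ux : (Ub * Uc)⁻¹ * Ux * (Ub * Uc) = Ux⁻¹ := by
  calc (Ub * Uc)⁻¹ * Ux * (Ub * Uc)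
      = ((Ub * Uc)⁻¹ * Ua * (Ub * Uc)) * ((Ub * Uc)⁻¹ * Uy * (Ub * Uc)) *
          ((Ub * Uc)⁻¹ * Ua * (Ub * Uc))⁻¹ := by rw [Ux_eq_conj_Uy]; group
    _ = (Ua⁻¹ * Uy * Ua)⁻¹ := by
        rw [Ub_mul_Uc_inv_conj_Ua, Ub_mul_Uc_inv_conj_Uy]; group
    _ = Ux⁻¹ := by rw [Ua_inv_conj_Uy]

theorem Ub_inv_conj_Ux : Ub⁻¹ * Ux * Ub = Uy := by
  calc Ub⁻¹ * Ux * Ub = Uc * ((Ub * Uc)⁻¹ * Ux * (Ub * Uc)) * Uc⁻¹ := by group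
    _ = Uc * (Uc⁻¹ * Uy * Uc) * Uc⁻¹ := by
        rw [Ub_mul_Uc_inv_conj_Ux, Uc_inv_conj_Uy]
    _ = Uy := by group

/-- The conjugation relations for `x` and `y` in `U`. -/
theorem conj_relations_xy :
    Ua⁻¹ * Ux * Ua = Uy ∧ Ub⁻¹ * Ux * Ub = Uy ∧ Uc⁻¹ * Ux * Uc = Uy ∧
    Ua⁻¹ * Uy * Ua = Ux ∧ Ub⁻¹ * Uy * Ub = Ux⁻¹ ∧ Uc⁻¹ * Uy * Uc = Ux⁻¹ := by
  refine ⟨?_, Ub_inv_conj_Ux, ?_, Ua_inv_conj_Uy, Ub_inv_conj_Uy, Uc_inv_conj_Uy⟩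
  · rw [Ux_eq_conj_Uy]; group
  · rw [← Uc_conj_Uy]; group
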